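/- arXiv:2205.08873 — 7 statements merged into one kernel-verified Lean document; each statement's English description precedes it below -/
import Mathlib

section
/- Let $G$ be a triangle-free simple graph on $n$ vertices with adjacency-matrix eigenvalues $\mu_1 \geq \mu_2 \geq \dots \geq \mu_n$. Then $\mu_1 + \mu_n \leq (3 - 2\sqrt{2})\,n$. -/
open Matrix SimpleGraph

/-- The Rayleigh lower bound for a real symmetric matrix. -/
lemma rayleigh_lower {n : ℕ} (A : Matrix (Fin n) (Fin n) ℝ) (hA : A.IsHermitian) (m : ℝ)
    (hm : ∀ i, m ≤ hA.eigenvalues i) (v : Fin n → ℝ) : m * (v ⬝ᵥ v) ≤ v ⬝ᵥ (A *ᵥ v) := by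
  have hT : Aᵀ = A := by simpa [Matrix.IsHermitian] using hA
  have key : ∀ w : Fin n → ℝ, v ⬝ᵥ w = ∑ i, (v ⬝ᵥ (hA.eigenvectorBasis i).ofLp) *
      ((hA.eigenvectorBasis i).ofLp ⬝ᵥ w) := by
    intro w
    have h := hA.eigenvectorBasis.sum_inner_mul_inner (WithLp.toLp 2 v) (WithLp.toLp 2 w)
    simp only [EuclideanSpace.inner_eq_star_dotProduct, star_trivial] at h
    rw [dotProduct_comm v w, ← h]
    refine Finset.sum_congr rfl fun i _ => ?_
    rw [dotProduct_comm v, dotProduct_comm _ w]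
  rw [key v, key (A *ᵥ v), Finset.mul_sum]
  refine Finset.sum_le_sum fun i _ => ?_
  have h1 : (hA.eigenvectorBasis i).ofLp ⬝ᵥ (A *ᵥ v)
      = hA.eigenvalues i * ((hA.eigenvectorBasis i).ofLp ⬝ᵥ v) := by
    rw [dotProduct_mulVec, ← mulVec_transpose, hT, hA.mulVec_eigenvectorBasis, smul_dotProduct,
      smul_eq_mul]
  rw [h1, dotProduct_comm v]
  nlinarith [mul_le_mul_of_nonneg_right (hm i)
    (mul_self_nonneg ((hA.eigenvectorBasis i).ofLp ⬝ᵥ v))]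

/-- The final optimisation. -/
lemma final_arith (N l m s : ℝ) (hN : 0 < N) (hm : m ≤ 0) (hml : m ≤ l) (hs0 : 0 ≤ s)
    (hs : l ≤ N * s) (h : 0 ≤ -l * s ^ 2 - m * (s - s ^ 2)) :
    l + m ≤ (3 - 2 * Real.sqrt 2) * N := by
  have r0 : 0 ≤ Real.sqrt 2 := Real.sqrt_nonneg 2
  have r2 : Real.sqrt 2 ^ 2 = 2 := Real.sq_sqrt (by norm_num)
  have r3 : Real.sqrt 2 < 1.5 := by nlinarith
  set r := Real.sqrt 2
  have hpos : 0 ≤ (3 - 2 * r) * N := mul_nonneg (by linarith) hN.le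
  rcases hs0.eq_or_lt with h0 | h0
  · subst h0
    linarith
  rcases le_or_gt l 0 with hl | hl
  · linarith
  have h1 : 0 ≤ -l * s - m * (1 - s) := by
    by_contra hc
    push Not at hc
    nlinarith [mul_pos h0 (neg_pos.mpr hc)]
  have h2 : l * (l - m) ≤ -m * N := by
    nlinarith [mul_le_mul_of_nonneg_right hs (sub_nonneg.mpr hml)]
  have h3 : 0 < N - l := by
    by_contra hc
    push Not at hc
    nlinarith [mul_nonneg_of_nonpos_of_nonpos hm hc, mul_pos hl hl]
  have h4 : (l + m) * (N - l) ≤ (3 - 2 * r) * N * (N - l) := by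
    have h5 : (2 * l - (2 - r) * N) ^ 2 =
        2 * (2 * l ^ 2 - (4 - 2 * r) * l * N + (3 - 2 * r) * N ^ 2) := by
      linear_combination N ^ 2 * r2
    have h6 := sq_nonneg (2 * l - (2 - r) * N)
    rw [h5] at h6
    linarith
  exact le_of_mul_le_mul_right h4 h3

/-- Let `G` be a triangle-free simple graph on `n` vertices with
adjacency-matrix eigenvalues `μ 0 ≥ μ 1 ≥ ⋯ ≥ μ (n-1)` (listed in nonincreasing order).
Then `μ₁ + μₙ ≤ (3 - 2√2) n`. -/
theorem triangle_free_sum_extreme_eigenvalues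
    (n : ℕ) (hn : 0 < n) (G : SimpleGraph (Fin n)) [DecidableRel G.Adj]
    (hG : G.CliqueFree 3)
    (hA : (G.adjMatrix ℝ).IsHermitian)
    (μ : Fin n → ℝ) (hmono : Antitone μ)
    (hperm : ∃ σ : Equiv.Perm (Fin n), ∀ i, μ i = hA.eigenvalues (σ i)) :
    μ ⟨0, hn⟩ + μ ⟨n - 1, by omega⟩ ≤ (3 - 2 * Real.sqrt 2) * n := by
  obtain ⟨σ, hσ⟩ := hperm
  set A := G.adjMatrix ℝ with hAdef
  have hmin : ∀ i, μ ⟨n - 1, by omega⟩ ≤ hA.eigenvalues i := by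
    intro i
    have := hσ (σ.symm i)
    rw [Equiv.apply_symm_apply] at this
    rw [← this]
    apply hmono
    rw [Fin.le_def]
    have := (σ.symm i).isLt
    simp only
    omega
  have hray := rayleigh_lower A hA _ hmin
  have hml : μ ⟨n - 1, by omega⟩ ≤ μ ⟨0, hn⟩ := hmono (by rw [Fin.le_def]; simp)
  have hl := hσ ⟨0, hn⟩
  generalize μ ⟨n - 1, by omega⟩ = m at *
  generalize μ ⟨0, hn⟩ = l at *
  have hev := hA.mulVec_eigenvectorBasis (σ ⟨0, hn⟩)
  rw [← hl] at hev
  have hunit : (hA.eigenvectorBasis (σ ⟨0, hn⟩)).ofLp ⬝ᵥ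
      (hA.eigenvectorBasis (σ ⟨0, hn⟩)).ofLp = 1 := by
    have h := hA.eigenvectorBasis.inner_eq_one (σ ⟨0, hn⟩)
    simpa only [EuclideanSpace.inner_eq_star_dotProduct, star_trivial] using h
  generalize (hA.eigenvectorBasis (σ ⟨0, hn⟩)).ofLp = x at *
  have hsym : ∀ u v, A u v = A v u := fun u v => by
    simp [hAdef, SimpleGraph.adjMatrix_apply, G.adj_comm]
  have hA0 : ∀ u v, 0 ≤ A u v := fun u v => by
    rw [hAdef, SimpleGraph.adjMatrix_apply]; split_ifs <;> norm_num
  have hAi : ∀ u v, A u v * A u v = A u v := fun u v => by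
    rw [hAdef, SimpleGraph.adjMatrix_apply]; split_ifs <;> norm_num
  have htri : ∀ u v w, A u v * A v w * A u w = 0 := fun u v w => by
    simp only [hAdef, SimpleGraph.adjMatrix_apply]
    by_cases h1 : G.Adj u v
    · by_cases h2 : G.Adj v w
      · by_cases h3 : G.Adj u w
        · exact absurd (SimpleGraph.is3Clique_triple_iff.mpr ⟨h1, h3, h2⟩) (hG _)
        · simp [h3]
      · simp [h2]
    · simp [h1]
  have hm0 : m ≤ 0 := by
    have := hray (Pi.single ⟨0, hn⟩ 1)
    simpa [hAdef] using this
  -- average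
  have havg : ∃ u, l ≤ n * ∑ v, A u v * x v ^ 2 := by
    by_contra hc
    push Not at hc
    have h1 : l = ∑ u, ∑ v, A u v * (x u * x v) := by
      have h : x ⬝ᵥ (A *ᵥ x) = l := by rw [hev, dotProduct_smul, hunit]; simp
      rw [← h]
      simp only [dotProduct, mulVec, Finset.mul_sum]
      refine Finset.sum_congr rfl fun u _ => Finset.sum_congr rfl fun v _ => by ring
    have h2 : ∑ u, ∑ v, A u v * x u ^ 2 = ∑ u, ∑ v, A u v * x v ^ 2 := by
      rw [Finset.sum_comm]
      refine Finset.sum_congr rfl fun u _ => Finset.sum_congr rfl fun v _ => by rw [hsym]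
    have h3 : 2 * ∑ u, ∑ v, A u v * (x u * x v) ≤
        ∑ u, ∑ v, A u v * x u ^ 2 + ∑ u, ∑ v, A u v * x v ^ 2 := by
      simp only [Finset.mul_sum, ← Finset.sum_add_distrib]
      refine Finset.sum_le_sum fun u _ => Finset.sum_le_sum fun v _ => ?_
      nlinarith [mul_nonneg (hA0 u v) (sq_nonneg (x u - x v))]
    have h4 : ∑ u : Fin n, (n : ℝ) * ∑ v, A u v * x v ^ 2 < ∑ u : Fin n, l :=
      Finset.sum_lt_sum_of_nonempty ⟨⟨0, hn⟩, Finset.mem_univ _⟩ fun u _ => hc u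
    rw [← Finset.mul_sum, Finset.sum_const, Finset.card_univ, Fintype.card_fin, nsmul_eq_mul] at h4
    have hnpos : (0 : ℝ) < n := by exact_mod_cast hn
    have := lt_of_mul_lt_mul_left h4 hnpos.le
    linarith
  obtain ⟨u, hu⟩ := havg
  refine final_arith n l m (∑ v, A u v * x v ^ 2) (by exact_mod_cast hn) hm0 hml
    (Finset.sum_nonneg fun v _ => mul_nonneg (hA0 u v) (sq_nonneg _)) hu ?_
  set s := ∑ v, A u v * x v ^ 2 with hs
  set y : Fin n → ℝ := fun v => A u v * x v with hy
  have hyy : y ⬝ᵥ y = s := by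
    simp only [dotProduct, hy, hs]
    refine Finset.sum_congr rfl fun v _ => ?_
    linear_combination (x v ^ 2) * hAi u v
  have hyx : y ⬝ᵥ x = s := by
    simp only [dotProduct, hy, hs]
    refine Finset.sum_congr rfl fun v _ => by ring
  have hyAy : y ⬝ᵥ (A *ᵥ y) = 0 := by
    simp only [dotProduct, mulVec, Finset.mul_sum, hy]
    refine Finset.sum_eq_zero fun v _ => Finset.sum_eq_zero fun w _ => ?_
    linear_combination (x v * x w) * htri u v w
  have hxAy : x ⬝ᵥ (A *ᵥ y) = l * s := by
    have hT : Aᵀ = A := by ext a b; exact hsym b a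
    rw [dotProduct_mulVec, ← mulVec_transpose, hT, hev, smul_dotProduct, dotProduct_comm, hyx,
      smul_eq_mul]
  have h := hray (y - s • x)
  simp only [mulVec_sub, mulVec_smul, hev, dotProduct_sub, sub_dotProduct, smul_dotProduct,
    dotProduct_smul, hyy, hyx, hyAy, hxAy, hunit, dotProduct_comm x y, smul_eq_mul] at h
  nlinarith [h]
end

section
/- Let $G$ be a triangle-free simple graph on $n$ vertices with adjacency-matrix eigenvalues $\mu_1 \geq \mu_2 \geq \dots \geq \mu_n$. Then $\mu_1 (\mu_1 - \mu_n) \leq -n\,\mu_n$. -/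
open Matrix SimpleGraph

lemma tfe_psd {n : ℕ} {A : Matrix (Fin n) (Fin n) ℝ} (hA : A.IsHermitian) (a b : ℝ)
    (h : ∀ i, 0 ≤ a * hA.eigenvalues i + b) : (a • A + b • (1 : Matrix (Fin n) (Fin n) ℝ)).PosSemidef := by
  have hU : (hA.eigenvectorUnitary : Matrix (Fin n) (Fin n) ℝ) * star (hA.eigenvectorUnitary : Matrix (Fin n) (Fin n) ℝ) = 1 :=
    Unitary.coe_mul_star_self _
  have hs := hA.spectral_theorem
  rw [Unitary.conjStarAlgAut_apply] at hs
  have hd : (diagonal (fun i => a * hA.eigenvalues i + b) : Matrix (Fin n) (Fin n) ℝ).PosSemidef :=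
    posSemidef_diagonal_iff.mpr h
  have h2 := hd.mul_mul_conjTranspose_same (hA.eigenvectorUnitary : Matrix (Fin n) (Fin n) ℝ)
  convert h2 using 1
  have e : (diagonal (fun i => a * hA.eigenvalues i + b) : Matrix (Fin n) (Fin n) ℝ)
      = a • diagonal (RCLike.ofReal ∘ hA.eigenvalues) + b • 1 := by
    ext i j
    by_cases hij : i = j
    · subst hij; simp
    · simp [hij]
  rw [e, Matrix.mul_add, Matrix.add_mul, Matrix.mul_smul, Matrix.smul_mul, Matrix.mul_smul,
    Matrix.smul_mul, Matrix.mul_one, ← star_eq_conjTranspose, ← hs, hU]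

lemma tfe_quad {n : ℕ} {A : Matrix (Fin n) (Fin n) ℝ} (a b : ℝ) (y : Fin n → ℝ) :
    y ⬝ᵥ ((a • A + b • (1 : Matrix (Fin n) (Fin n) ℝ)) *ᵥ y) = a * (y ⬝ᵥ (A *ᵥ y)) + b * (y ⬝ᵥ y) := by
  simp [Matrix.add_mulVec, Matrix.smul_mulVec, dotProduct_add, dotProduct_smul]

theorem triangle_free_eigenvalue_product_bound
    (n : ℕ) (hn : 0 < n) (G : SimpleGraph (Fin n)) [DecidableRel G.Adj]
    (hG : G.CliqueFree 3)
    (hA : (G.adjMatrix ℝ).IsHermitian)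
    (μ : Fin n → ℝ) (hmono : Antitone μ)
    (hperm : ∃ σ : Equiv.Perm (Fin n), ∀ i, μ i = hA.eigenvalues (σ i)) :
    μ ⟨0, hn⟩ * (μ ⟨0, hn⟩ - μ ⟨n - 1, by omega⟩) ≤ -(n : ℝ) * μ ⟨n - 1, by omega⟩ := by
  obtain ⟨σ, hσ⟩ := hperm
  have hmax : ∀ i, hA.eigenvalues i ≤ μ ⟨0, hn⟩ := fun i => by
    rw [← σ.apply_symm_apply i, ← hσ]
    exact hmono (by simp [Fin.le_def])
  have hmin : ∀ i, μ ⟨n - 1, by omega⟩ ≤ hA.eigenvalues i := fun i => by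
    rw [← σ.apply_symm_apply i, ← hσ]
    exact hmono (by rw [Fin.le_def]; have := (σ.symm i).2; simp; omega)
  have hM0 : μ ⟨0, hn⟩ = hA.eigenvalues (σ ⟨0, hn⟩) := hσ _
  generalize μ ⟨0, hn⟩ = M at *
  generalize μ ⟨n - 1, by omega⟩ = m at *
  have hA' : ∀ y z : Fin n → ℝ, y ⬝ᵥ (G.adjMatrix ℝ *ᵥ z) = z ⬝ᵥ (G.adjMatrix ℝ *ᵥ y) := by
    intro y z
    rw [dotProduct_mulVec, dotProduct_comm, ← mulVec_transpose, transpose_adjMatrix]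
  have hlow := tfe_psd hA 1 (-m) (fun i => by linarith [hmin i])
  have hupp := tfe_psd hA (-1) M (fun i => by linarith [hmax i])
  have low : ∀ y : Fin n → ℝ, m * (y ⬝ᵥ y) ≤ y ⬝ᵥ (G.adjMatrix ℝ *ᵥ y) := fun y => by
    have := hlow.dotProduct_mulVec_nonneg y
    rw [star_trivial, tfe_quad] at this
    linarith
  have upp : ∀ y : Fin n → ℝ, y ⬝ᵥ (G.adjMatrix ℝ *ᵥ y) ≤ M * (y ⬝ᵥ y) := fun y => by
    have := hupp.dotProduct_mulVec_nonneg y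
    rw [star_trivial, tfe_quad] at this
    linarith
  -- nonnegative Perron vector
  obtain ⟨x, hx0, hx1, hxA⟩ : ∃ x : Fin n → ℝ, (∀ i, 0 ≤ x i) ∧ x ⬝ᵥ x = 1 ∧
      G.adjMatrix ℝ *ᵥ x = M • x := by
    set u : Fin n → ℝ := ⇑(hA.eigenvectorBasis (σ ⟨0, hn⟩)) with hu
    have hu1 : u ⬝ᵥ u = 1 := by
      have h := hA.eigenvectorBasis.orthonormal.1 (σ ⟨0, hn⟩)
      have h2 := EuclideanSpace.real_norm_sq_eq (hA.eigenvectorBasis (σ ⟨0, hn⟩))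
      rw [h] at h2
      simp only [dotProduct, ← pow_two]
      rw [hu, ← h2]; norm_num
    have huA : G.adjMatrix ℝ *ᵥ u = M • u := by
      rw [hM0]; exact hA.mulVec_eigenvectorBasis _
    have hx1 : (fun i => |u i|) ⬝ᵥ (fun i => |u i|) = 1 := by
      rw [← hu1]; simp [dotProduct]
    refine ⟨fun i => |u i|, fun i => abs_nonneg _, hx1, ?_⟩
    have hge : M ≤ (fun i => |u i|) ⬝ᵥ (G.adjMatrix ℝ *ᵥ (fun i => |u i|)) := by
      have h1 : u ⬝ᵥ (G.adjMatrix ℝ *ᵥ u) = M := by rw [huA, dotProduct_smul, hu1]; simp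
      rw [← h1]
      simp only [dotProduct, adjMatrix_mulVec_apply, Finset.mul_sum]
      refine Finset.sum_le_sum fun i _ => Finset.sum_le_sum fun j _ => ?_
      rw [← abs_mul]; exact le_abs_self _
    have hle := upp (fun i => |u i|)
    rw [hx1] at hle
    have hz := (hupp.dotProduct_mulVec_zero_iff (fun i => |u i|)).1 (by
      rw [star_trivial, tfe_quad, hx1]; linarith)
    rw [Matrix.add_mulVec, Matrix.smul_mulVec, Matrix.smul_mulVec, one_mulVec] at hz
    ext i
    have := congrFun hz i
    simp only [Pi.add_apply, Pi.smul_apply, Pi.zero_apply, smul_eq_mul] at this ⊢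
    linarith
  have hm : m ≤ 0 := by
    have := low (Pi.single ⟨0, hn⟩ 1)
    simpa using this
  -- weighted Hoffman bound on neighbourhoods
  have hoff : ∀ v, (∑ i ∈ G.neighborFinset v, x i ^ 2) * (M - m) ≤ -m := by
    intro v
    set s := ∑ i ∈ G.neighborFinset v, x i ^ 2 with hs
    have hs0 : 0 ≤ s := Finset.sum_nonneg fun i _ => sq_nonneg _
    set y : Fin n → ℝ := fun i => if G.Adj v i then x i else 0 with hy
    have hss : s = ∑ i, if G.Adj v i then x i ^ 2 else 0 := by
      rw [hs, ← Finset.sum_filter]; congr 1; ext; simp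
    have hyy : y ⬝ᵥ y = s := by
      rw [hss]; simp only [dotProduct, hy]
      refine Finset.sum_congr rfl fun i _ => ?_
      split_ifs <;> ring
    have hxy : x ⬝ᵥ y = s := by
      rw [hss]; simp only [dotProduct, hy]
      refine Finset.sum_congr rfl fun i _ => ?_
      split_ifs <;> ring
    have hyA : y ⬝ᵥ (G.adjMatrix ℝ *ᵥ y) = 0 := by
      simp only [dotProduct, adjMatrix_mulVec_apply, Finset.mul_sum]
      refine Finset.sum_eq_zero fun i _ => Finset.sum_eq_zero fun j hj => ?_
      rw [mem_neighborFinset] at hj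
      simp only [hy]
      by_cases h1 : G.Adj v i
      · by_cases h2 : G.Adj v j
        · exact absurd (is3Clique_triple_iff.2 ⟨h1, h2, hj⟩) (hG {v, i, j})
        · simp [h2]
      · simp [h1]
    have hq := low (y - s • x)
    have e1 : (y - s • x) ⬝ᵥ (y - s • x) = s - s ^ 2 := by
      simp only [sub_dotProduct, dotProduct_sub, smul_dotProduct, dotProduct_smul, smul_eq_mul,
        hyy, hxy, hx1, dotProduct_comm y x]
      ring
    have e2 : (y - s • x) ⬝ᵥ (G.adjMatrix ℝ *ᵥ (y - s • x)) = - M * s ^ 2 := by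
      simp only [mulVec_sub, mulVec_smul, sub_dotProduct, dotProduct_sub, smul_dotProduct,
        dotProduct_smul, smul_eq_mul, hyA, hA' x y, hxA, hxy, hx1, dotProduct_comm y x]
      ring
    rw [e1, e2] at hq
    rcases hs0.eq_or_lt with h | h
    · rw [← h]; linarith
    · refine le_of_mul_le_mul_left ?_ h
      nlinarith
  -- sum with weights x
  have hsum : (∑ v, x v * ∑ i ∈ G.neighborFinset v, x i ^ 2) = M * ∑ i, x i * x i ^ 2 := by
    have h := hA' x (fun i => x i ^ 2)
    rw [hxA, dotProduct_smul] at h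
    simp only [dotProduct, adjMatrix_mulVec_apply, smul_eq_mul] at h
    rw [h]
    congr 1
    exact Finset.sum_congr rfl fun i _ => mul_comm _ _
  have hsq : ∑ i, x i ^ 2 = 1 := by
    rw [← hx1]; simp [dotProduct, pow_two]
  have hcheb : ∑ i, x i ≤ n * ∑ i, x i * x i ^ 2 := by
    have hmv : Monovary x (fun i => x i ^ 2) := by
      intro i j hij
      exact (lt_of_pow_lt_pow_left₀ 2 (hx0 j) hij).le
    have := hmv.sum_mul_sum_le_card_mul_sum
    simpa [hsq] using this
  have hX : 0 < ∑ i, x i := by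
    rcases (Finset.sum_nonneg fun i (_ : i ∈ Finset.univ) => hx0 i).eq_or_lt with h | h
    · have := (Finset.sum_eq_zero_iff_of_nonneg fun i _ => hx0 i).1 h.symm
      rw [Finset.sum_eq_zero (fun i hi => by rw [this i hi]; norm_num)] at hsq
      norm_num at hsq
    · exact h
  have hM : 0 ≤ M := by
    have h : M = x ⬝ᵥ (G.adjMatrix ℝ *ᵥ x) := by rw [hxA, dotProduct_smul, hx1]; simp
    rw [h]
    simp only [dotProduct, adjMatrix_mulVec_apply]
    exact Finset.sum_nonneg fun i _ => mul_nonneg (hx0 i) (Finset.sum_nonneg fun j _ => hx0 j)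
  have hfin : (M * ∑ i, x i * x i ^ 2) * (M - m) ≤ -m * ∑ i, x i := by
    rw [← hsum, Finset.sum_mul, Finset.mul_sum]
    refine Finset.sum_le_sum fun v _ => ?_
    have := mul_le_mul_of_nonneg_left (hoff v) (hx0 v)
    linarith
  have h1 : 0 ≤ M * (M - m) := mul_nonneg hM (by linarith)
  refine le_of_mul_le_mul_right ?_ hX
  have h2 := mul_le_mul_of_nonneg_left hcheb h1
  have h3 := mul_le_mul_of_nonneg_left hfin (Nat.cast_nonneg (α := ℝ) n)
  linarith
end

section
/- Let $G$ be a triangle-free simple graph on $n$ vertices with at least one edge, and let $\mu_1 \geq \mu_2 \geq \dots \geq \mu_n$ be its adjacency-matrix eigenvalues. Then $\mu_1 \leq \dfrac{-n\,\mu_n}{\mu_1 - \mu_n}$. -/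
open Matrix SimpleGraph

lemma aux_trace_pow {n : ℕ} {A : Matrix (Fin n) (Fin n) ℝ} (hA : A.IsHermitian) (k : ℕ) :
    (A ^ k).trace = ∑ i, hA.eigenvalues i ^ k := by
  conv_lhs => rw [hA.spectral_theorem, ← map_pow, Unitary.conjStarAlgAut_apply,
    Matrix.trace_mul_comm, ← mul_assoc]
  simp [Matrix.diagonal_pow, Matrix.trace_diagonal]

lemma aux_rayleigh {n : ℕ} {A : Matrix (Fin n) (Fin n) ℝ} (hA : A.IsHermitian) (c : ℝ)
    (hc : ∀ i, hA.eigenvalues i ≤ c) (x : Fin n → ℝ) :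
    x ⬝ᵥ (A *ᵥ x) ≤ c * (x ⬝ᵥ x) := by
  have hP : (c • (1 : Matrix (Fin n) (Fin n) ℝ) - A).PosSemidef := by
    have h1 : c • (1 : Matrix (Fin n) (Fin n) ℝ) - A =
        (hA.eigenvectorUnitary : Matrix (Fin n) (Fin n) ℝ) *
          diagonal (fun i => c - hA.eigenvalues i) *
          (hA.eigenvectorUnitary : Matrix (Fin n) (Fin n) ℝ)ᴴ := by
      have h2 : diagonal (fun i => c - hA.eigenvalues i) =
          c • (1 : Matrix (Fin n) (Fin n) ℝ) - diagonal (RCLike.ofReal ∘ hA.eigenvalues) := by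
        ext i j
        by_cases h : i = j
        · subst h; simp
        · simp [h]
      have h3 := hA.spectral_theorem
      rw [Unitary.conjStarAlgAut_apply] at h3
      rw [h2, mul_sub, sub_mul]
      congr 1
      rw [mul_smul_comm, smul_mul_assoc, mul_one, ← star_eq_conjTranspose,
        Unitary.mul_star_self_of_mem hA.eigenvectorUnitary.2]
    rw [h1]
    apply PosSemidef.mul_mul_conjTranspose_same
    exact PosSemidef.diagonal (fun i => sub_nonneg.2 (hc i))
  have h := hP.dotProduct_mulVec_nonneg x
  simp only [sub_mulVec, smul_mulVec, one_mulVec, dotProduct_sub, dotProduct_smul, star_trivial,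
    smul_eq_mul] at h
  linarith

lemma aux_trace_cube {n : ℕ} (G : SimpleGraph (Fin n)) [DecidableRel G.Adj]
    (hG : G.CliqueFree 3) : ((G.adjMatrix ℝ) ^ 3).trace = 0 := by
  rw [Matrix.trace]
  apply Finset.sum_eq_zero
  intro i _
  rw [pow_succ, pow_two, diag_apply, Matrix.mul_apply]
  apply Finset.sum_eq_zero
  intro j _
  rw [Matrix.mul_apply, Finset.sum_mul]
  apply Finset.sum_eq_zero
  intro k _
  by_contra hne
  simp only [adjMatrix_apply] at hne
  by_cases h1 : G.Adj i k <;> by_cases h2 : G.Adj k j <;> by_cases h3 : G.Adj j i <;>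
    simp [h1, h2, h3] at hne
  exact hG {i, k, j} (is3Clique_triple_iff.2 ⟨h1, h3.symm, h2⟩)

/-- Let `G` be a triangle-free simple graph on `n` vertices with at least
one edge, and let `μ₁ ≥ ⋯ ≥ μₙ` be its adjacency-matrix eigenvalues. Then
`μ₁ ≤ (-n μₙ) / (μ₁ - μₙ)`. -/
theorem triangle_free_largest_eigenvalue_bound
    (n : ℕ) (hn : 0 < n) (G : SimpleGraph (Fin n)) [DecidableRel G.Adj]
    (hG : G.CliqueFree 3)
    (hedge : G.edgeSet.Nonempty)
    (hA : (G.adjMatrix ℝ).IsHermitian)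
    (μ : Fin n → ℝ) (hmono : Antitone μ)
    (hperm : ∃ σ : Equiv.Perm (Fin n), ∀ i, μ i = hA.eigenvalues (σ i)) :
    μ ⟨0, hn⟩ ≤ (-(n : ℝ) * μ ⟨n - 1, by omega⟩) / (μ ⟨0, hn⟩ - μ ⟨n - 1, by omega⟩) := by
  obtain ⟨σ, hσ⟩ := hperm
  have hpow : ∀ k : ℕ, ((G.adjMatrix ℝ) ^ k).trace = ∑ i, μ i ^ k := by
    intro k
    rw [aux_trace_pow hA, ← Equiv.sum_comp σ]
    simp [hσ]
  have hle : ∀ i, μ i ≤ μ ⟨0, hn⟩ := fun i => hmono (Nat.zero_le _)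
  have hge : ∀ i, μ ⟨n - 1, by omega⟩ ≤ μ i := fun i => hmono (by
    rw [Fin.le_def]; have := i.2; simp only; omega)
  have h2 : ((G.adjMatrix ℝ) ^ 2).trace = ∑ v, (G.degree v : ℝ) := by
    rw [pow_two, Matrix.trace]
    exact Finset.sum_congr rfl fun i _ => adjMatrix_mul_self_apply_self G i
  have hR := aux_rayleigh hA (μ ⟨0, hn⟩) (fun i => by
    have := hle (σ.symm i); rwa [hσ, Equiv.apply_symm_apply] at this) (Function.const _ 1)
  have hR' : ∑ v, (G.degree v : ℝ) ≤ μ ⟨0, hn⟩ * n := by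
    simpa [dotProduct] using hR
  have hpos : 0 < ∑ v, (G.degree v : ℝ) := by
    obtain ⟨e, he⟩ := hedge
    induction e with
    | _ a b =>
      have hab : G.Adj a b := he
      have : 0 < G.degree a := (G.degree_pos_iff_exists_adj a).2 ⟨b, hab⟩
      exact Finset.sum_pos' (fun _ _ => by positivity) ⟨a, Finset.mem_univ _, by exact_mod_cast this⟩
  have hnpos : (0 : ℝ) < n := by exact_mod_cast hn
  have h1 := hpow 1
  rw [pow_one, trace_adjMatrix] at h1
  have h3 := hpow 3
  rw [aux_trace_cube G hG] at h3
  have h2' := hpow 2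
  rw [h2] at h2'
  set a := μ ⟨0, hn⟩ with ha
  set b := μ ⟨n - 1, by omega⟩ with hb
  have hapos : 0 < a := by
    by_contra h
    nlinarith
  have hbneg : b ≤ 0 := by
    by_contra h
    have : 0 < ∑ i, μ i ^ 1 :=
      Finset.sum_pos (fun i _ => by have := hge i; rw [pow_one]; linarith) ⟨⟨0, hn⟩, Finset.mem_univ _⟩
    linarith
  have hkey : (a - b) * a ^ 2 ≤ ∑ i, (μ i - b) * μ i ^ 2 :=
    Finset.single_le_sum (f := fun i => (μ i - b) * μ i ^ 2)
      (fun i _ => mul_nonneg (sub_nonneg.2 (hge i)) (sq_nonneg _)) (Finset.mem_univ (⟨0, hn⟩ : Fin n))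
  have hexp : ∑ i, (μ i - b) * μ i ^ 2 = ∑ i, μ i ^ 3 - b * ∑ i, μ i ^ 2 := by
    rw [Finset.mul_sum, ← Finset.sum_sub_distrib]
    exact Finset.sum_congr rfl fun i _ => by ring
  rw [hexp, ← h3, ← h2'] at hkey
  rw [le_div_iff₀ (by linarith)]
  have h5 : -b * ∑ v, (G.degree v : ℝ) ≤ -b * (a * n) :=
    mul_le_mul_of_nonneg_left hR' (by linarith)
  have h6 : a * (a * (a - b)) ≤ a * (-(n : ℝ) * b) := by linarith
  exact le_of_mul_le_mul_left h6 hapos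
end

section
/- Let $G$ be a triangle-free simple graph that is strongly regular with parameters $(n, k, 0, b)$, and let $\mu_1 \geq \mu_2 \geq \dots \geq \mu_n$ be its adjacency-matrix eigenvalues. Then $\mu_1 + \mu_n \leq 0.14\, n$. -/
open Matrix SimpleGraph

lemma idem_trace_nat {n : ℕ} (P : Matrix (Fin n) (Fin n) ℝ) (h : P * P = P) :
    ∃ g : ℕ, P.trace = g := by
  have he : IsIdempotentElem (Matrix.toLin' P) := by
    unfold IsIdempotentElem
    rw [Module.End.mul_eq_comp, ← Matrix.toLin'_mul, h]
  refine ⟨Module.finrank ℝ (LinearMap.range (Matrix.toLin' P)), ?_⟩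
  rw [← Matrix.trace_toLin'_eq]
  exact (LinearMap.IsIdempotentElem.isProj_range _ he).trace

lemma sum_cube_nonneg {n : ℕ} (F : Matrix (Fin n) (Fin n) ℝ) (t : ℝ) (ht : 0 < t)
    (hs : ∀ u v, F u v = F v u) (h : F * F = t • F) :
    0 ≤ ∑ u, ∑ v, (F u v) ^ 3 := by
  have h1 : ∀ u v, t * F u v = ∑ w, F u w * F v w := by
    intro u v
    have := congrFun (congrFun h u) v
    rw [Matrix.mul_apply] at this
    simp only [Matrix.smul_apply, smul_eq_mul] at this
    rw [← this]
    exact Finset.sum_congr rfl fun w _ => by rw [hs v w]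
  have h2 : ∑ u, ∑ v, (t * F u v) ^ 3
      = ∑ a, ∑ b, ∑ c, (∑ u, F u a * F u b * F u c) ^ 2 := by
    have e1 : ∀ u v, (t * F u v) ^ 3 =
        ∑ a, ∑ b, ∑ c, (F u a * F u b * F u c) * (F v a * F v b * F v c) := by
      intro u v
      rw [h1, pow_succ, pow_two, Finset.sum_mul_sum, Finset.sum_mul]
      refine Finset.sum_congr rfl fun a _ => ?_
      rw [Finset.sum_mul]
      refine Finset.sum_congr rfl fun b _ => ?_
      rw [Finset.mul_sum]
      refine Finset.sum_congr rfl fun c _ => ?_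
      ring
    have e2 : ∀ a b c, (∑ u, F u a * F u b * F u c) ^ 2 =
        ∑ u, ∑ v, (F u a * F u b * F u c) * (F v a * F v b * F v c) := by
      intro a b c
      rw [pow_two, Finset.sum_mul_sum]
    simp only [e1, e2]
    simp only [← Fintype.sum_prod_type']
    exact Fintype.sum_equiv (⟨fun p => (p.2.2.1, p.2.2.2.1, p.2.2.2.2, p.1, p.2.1),
      fun p => (p.2.2.2.1, p.2.2.2.2, p.1, p.2.1, p.2.2.1), fun _ => rfl, fun _ => rfl⟩ :
      (Fin n × Fin n × Fin n × Fin n × Fin n) ≃ (Fin n × Fin n × Fin n × Fin n × Fin n))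
      _ _ (fun _ => rfl)
  have h3 : ∑ u, ∑ v, (t * F u v) ^ 3 = t ^ 3 * ∑ u, ∑ v, (F u v) ^ 3 := by
    simp only [Finset.mul_sum, mul_pow]
  have h4 : 0 ≤ t ^ 3 * ∑ u, ∑ v, (F u v) ^ 3 := by
    rw [← h3, h2]
    positivity
  exact nonneg_of_mul_nonneg_right h4 (by positivity)

lemma arith_final (r : ℕ) (hr : 1 ≤ r) (s : ℝ) (hs : 1 < s) (hrs : (r : ℝ) < s)
    (hK : s ≤ r ^ 2 + 2 * r) :
    0 ≤ 7 * ((r + 1) * s - 2 * r) * ((r + 2) * s - r) - 50 * r * (s - 1) * (s - r) := by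
  rcases (by omega : r = 1 ∨ r = 2 ∨ r = 3 ∨ 4 ≤ r) with rfl | rfl | rfl | h
  · norm_num at *; nlinarith
  · norm_num at *; nlinarith
  · norm_num at *; nlinarith
  · have h' : (4 : ℝ) ≤ r := by exact_mod_cast h
    have e : 7 * (((r : ℝ) + 1) * s - 2 * r) * ((r + 2) * s - r) - 50 * r * (s - 1) * (s - r)
      = (7 * r ^ 2 - 29 * r + 14) * s ^ 2 + 15 * r * s + r ^ 2 * (29 * s - 36) := by ring
    rw [e]
    have : 0 ≤ 7 * (r : ℝ) ^ 2 - 29 * r + 14 := by nlinarith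
    have : 0 ≤ 29 * s - 36 := by linarith
    positivity

lemma krein_arith (r s k c n : ℝ) (hr : 0 < r) (hrs : r < s) (hs : 1 < s)
    (hk : k = s * (r + 1) - r) (hc : n * c = k - r)
    (hn : n * (s - r) = ((r + 1) * s - 2 * r) * ((r + 2) * s - r))
    (h : 0 ≤ n * c ^ 3 + k * ((c - 1) ^ 3 - c ^ 3) + ((r + c) ^ 3 - c ^ 3)) :
    s ≤ r ^ 2 + 2 * r := by
  have hP : 0 < (r + 1) * s - 2 * r := by nlinarith
  have hQ : 0 < (r + 2) * s - r := by nlinarith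
  have hkP : k - r = (r + 1) * s - 2 * r := by rw [hk]; ring
  have hcQ : c * ((r + 2) * s - r) = s - r := by
    have : ((r + 1) * s - 2 * r) * (c * ((r + 2) * s - r)) = ((r + 1) * s - 2 * r) * (s - r) := by
      linear_combination -c * hn + (s - r) * (hc + hkP)
    exact mul_left_cancel₀ hP.ne' this
  have e1 : n * c ^ 3 + k * ((c - 1) ^ 3 - c ^ 3) + ((r + c) ^ 3 - c ^ 3)
     = r ^ 3 - k + 3 * (r ^ 2 + k) * c - 2 * (k - r) * c ^ 2 := by
    linear_combination c ^ 2 * hc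
  have e2 : (r ^ 3 - k + 3 * (r ^ 2 + k) * c - 2 * (k - r) * c ^ 2) * ((r + 2) * s - r) ^ 2
     = (r + 1) * k * (r * (s - 1)) * (r ^ 2 + 2 * r - s) := by
    have : (r ^ 3 - k + 3 * (r ^ 2 + k) * c - 2 * (k - r) * c ^ 2) * ((r + 2) * s - r) ^ 2
      = (r ^ 3 - k) * ((r + 2) * s - r) ^ 2
        + 3 * (r ^ 2 + k) * (c * ((r + 2) * s - r)) * ((r + 2) * s - r)
        - 2 * (k - r) * (c * ((r + 2) * s - r)) ^ 2 := by ring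
    rw [this, hcQ, hk]; ring
  rw [e1] at h
  have h2 : 0 ≤ (r + 1) * k * (r * (s - 1)) * (r ^ 2 + 2 * r - s) := by
    rw [← e2]; positivity
  have hk0 : 0 < k := by linarith
  have hs1 : 0 < s - 1 := by linarith
  have := nonneg_of_mul_nonneg_right h2 (by positivity)
  linarith

lemma int_root (r : ℝ) (hr : 0 ≤ r) (b m p q : ℤ) (h : r * (r + b) = m) (hq : q ≠ 0)
    (hpq : r * q = p) : ∃ t : ℕ, r = t := by
  have hint : IsIntegral ℤ r := by
    refine ⟨Polynomial.X ^ 2 + Polynomial.C b * Polynomial.X - Polynomial.C m, ?_, ?_⟩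
    · monicity!
    · simp only [Polynomial.eval₂_sub, Polynomial.eval₂_add, Polynomial.eval₂_mul,
        Polynomial.eval₂_pow, Polynomial.eval₂_X, Polynomial.eval₂_C]
      simp only [algebraMap_int_eq, eq_intCast]
      linarith
  have hx : r = ((p / q : ℚ) : ℝ) := by
    push_cast
    field_simp
    exact hpq
  have hint' : IsIntegral ℤ (p / q : ℚ) := by
    rw [hx] at hint
    exact (isIntegral_algHom_iff (algebraMap ℚ ℝ).toIntAlgHom (algebraMap ℚ ℝ).injective).1 hint
  obtain ⟨z, hz⟩ := IsIntegrallyClosed.isIntegral_iff.1 hint'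
  have hz' : r = z := by
    rw [hx, ← hz]; simp
  have : 0 ≤ z := by rw [hz'] at hr; exact_mod_cast hr
  lift z to ℕ using this
  exact ⟨z, by simpa using hz'⟩

/-- A multiple of the projection onto the smallest eigenspace. -/
noncomputable def projF {n : ℕ} (A : Matrix (Fin n) (Fin n) ℝ) (r c : ℝ) :
    Matrix (Fin n) (Fin n) ℝ := r • (1 : Matrix (Fin n) (Fin n) ℝ) - A + c • Matrix.of fun _ _ => 1

lemma core {n k : ℕ} (hn : 0 < n) (G : SimpleGraph (Fin n)) [DecidableRel G.Adj]
    (hreg : G.IsRegularOfDegree k) (r s b c : ℝ) (hc : n * c = k - r) 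
    (hAA : G.adjMatrix ℝ * G.adjMatrix ℝ = (r - s) • G.adjMatrix ℝ + (r * s) • 1
      + b • Matrix.of fun _ _ => 1) :
    G.adjMatrix ℝ * projF (G.adjMatrix ℝ) r c = (-s) • projF (G.adjMatrix ℝ) r c ∧
    projF (G.adjMatrix ℝ) r c * projF (G.adjMatrix ℝ) r c
      = (r + s) • projF (G.adjMatrix ℝ) r c ∧
    (k : ℝ) ^ 2 = (r - s) * k + r * s + b * n := by
  set A := G.adjMatrix ℝ with hA
  set J : Matrix (Fin n) (Fin n) ℝ := Matrix.of fun _ _ => 1 with hJ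
  have hAJ : A * J = (k : ℝ) • J := by
    ext u v
    have := hreg u
    simp [hA, hJ, this]
  have hJA : J * A = (k : ℝ) • J := by
    ext u v
    have := hreg v
    simp [hA, hJ, this]
  have hJJ : J * J = (n : ℝ) • J := by
    ext u v
    simp [hJ, Matrix.mul_apply]
  have hk2 : (k : ℝ) ^ 2 = (r - s) * k + r * s + b * n := by
    have h1 : (A * A) * J = A * (A * J) := Matrix.mul_assoc _ _ _
    rw [hAA, hAJ, Matrix.mul_smul, hAJ, Matrix.add_mul, Matrix.add_mul, Matrix.smul_mul,
      Matrix.smul_mul, Matrix.smul_mul, hAJ, hJJ, Matrix.one_mul] at h1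
    have := congrFun (congrFun h1 ⟨0, hn⟩) ⟨0, hn⟩
    simp [hJ] at this
    linarith
  have hn' : (n : ℝ) ≠ 0 := by positivity
  have hcb : c * (k + s) = b := by
    apply mul_left_cancel₀ hn'
    linear_combination (k + s) * hc + hk2
  have hAF : A * projF A r c = (-s) • projF A r c := by
    unfold projF
    rw [Matrix.mul_add, Matrix.mul_sub, hAA, Matrix.mul_smul, Matrix.mul_smul, ← hJ, hAJ,
      Matrix.mul_one]
    have : b = c * k + c * s := by linarith
    rw [this]
    module
  have hJF : J * projF A r c = 0 := by
    unfold projF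
    rw [Matrix.mul_add, Matrix.mul_sub, Matrix.mul_smul, Matrix.mul_smul, ← hJ, hJA, hJJ,
      Matrix.mul_one]
    have : (k : ℝ) = n * c + r := by linarith
    rw [this]
    module
  refine ⟨hAF, ?_, hk2⟩
  have : projF A r c * projF A r c = (r • (1 : Matrix (Fin n) (Fin n) ℝ) - A + c • J) * projF A r c := rfl
  rw [this, Matrix.add_mul, Matrix.sub_mul, Matrix.smul_mul, Matrix.smul_mul, hAF, hJF,
    Matrix.one_mul]
  module

lemma trace_projF {n : ℕ} (G : SimpleGraph (Fin n)) [DecidableRel G.Adj] (r c : ℝ) :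
    (projF (G.adjMatrix ℝ) r c).trace = n * r + n * c := by
  simp [projF, Matrix.trace, mul_add]

lemma row_sum {n k : ℕ} (G : SimpleGraph (Fin n)) [DecidableRel G.Adj]
    (hreg : G.IsRegularOfDegree k) (u : Fin n) : ∑ v, G.adjMatrix ℝ u v = k := by
  have := G.adjMatrix_mulVec_const_apply_of_regular (α := ℝ) (a := 1) hreg (v := u)
  simpa [Matrix.mulVec, dotProduct] using this

lemma sum_projF {n k : ℕ} (G : SimpleGraph (Fin n)) [DecidableRel G.Adj]
    (hreg : G.IsRegularOfDegree k) (r c : ℝ) :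
    ∑ u, ∑ v, (projF (G.adjMatrix ℝ) r c u v) ^ 3 =
     n * (n * c ^ 3 + k * ((c - 1) ^ 3 - c ^ 3) + ((r + c) ^ 3 - c ^ 3)) := by
  have h1 : ∀ u v, (projF (G.adjMatrix ℝ) r c u v) ^ 3 =
      c ^ 3 + G.adjMatrix ℝ u v * ((c - 1) ^ 3 - c ^ 3)
        + (if u = v then 1 else 0) * ((r + c) ^ 3 - c ^ 3) := by
    intro u v
    by_cases h : u = v
    · subst h; simp [projF]
    · by_cases h' : G.Adj u v
      · simp [projF, h, h', Matrix.one_apply]; ring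
      · simp [projF, h, h', Matrix.one_apply]
  have h2 : ∀ u, ∑ v, G.adjMatrix ℝ u v = k := row_sum G hreg
  have h3 : ∀ u, ∑ v, (projF (G.adjMatrix ℝ) r c u v) ^ 3 =
      n * c ^ 3 + k * ((c - 1) ^ 3 - c ^ 3) + ((r + c) ^ 3 - c ^ 3) := by
    intro u
    simp only [h1, Finset.sum_add_distrib, ← Finset.sum_mul, h2]
    simp
  simp only [h3, Finset.sum_const, Finset.card_univ, Fintype.card_fin, nsmul_eq_mul]

lemma exists_eig {n : ℕ} (A : Matrix (Fin n) (Fin n) ℝ) (hA : A.IsHermitian)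
    (F : Matrix (Fin n) (Fin n) ℝ) (hF : F ≠ 0) (t : ℝ) (h : A * F = t • F) :
    ∃ i, hA.eigenvalues i = t := by
  have hv : ∃ v, (fun u => F u v) ≠ 0 := by
    by_contra! hcon
    apply hF
    ext u v
    exact congrFun (hcon v) u
  obtain ⟨v, hv⟩ := hv
  have hE : Module.End.HasEigenvector (Matrix.toLin' A) t (fun u => F u v) := by
    refine ⟨?_, hv⟩
    rw [Module.End.mem_eigenspace_iff]
    ext u
    have := congrFun (congrFun h u) v
    simpa [Matrix.mul_apply, Matrix.mulVec, dotProduct] using this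
  have h1 : t ∈ spectrum ℝ A := by
    rw [← Matrix.spectrum_toLin']
    exact (Module.End.hasEigenvalue_of_hasEigenvector hE).mem_spectrum
  rw [hA.spectrum_real_eq_range_eigenvalues] at h1
  exact h1

lemma eig_le {n k : ℕ} (G : SimpleGraph (Fin n)) [DecidableRel G.Adj]
    (hreg : G.IsRegularOfDegree k) (hA : (G.adjMatrix ℝ).IsHermitian) (i : Fin n) :
    hA.eigenvalues i ≤ k := by
  have h1 := hA.eigenvalues_mem_spectrum_real i
  rw [← Matrix.spectrum_toLin'] at h1
  obtain ⟨u, hu⟩ := eigenvalue_mem_ball (Module.End.hasEigenvalue_iff_mem_spectrum.2 h1)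
  have h2 : ∑ j ∈ Finset.univ.erase u, ‖G.adjMatrix ℝ u j‖ ≤ k := by
    calc _ ≤ ∑ j, ‖G.adjMatrix ℝ u j‖ :=
          Finset.sum_le_sum_of_subset_of_nonneg (Finset.erase_subset _ _) (fun _ _ _ => norm_nonneg _)
      _ = ∑ j, G.adjMatrix ℝ u j := by
          refine Finset.sum_congr rfl fun j _ => ?_
          rw [adjMatrix_apply]; split_ifs <;> simp
      _ = k := row_sum G hreg u
  rw [mem_closedBall_iff_norm] at hu
  have h3 := (le_abs_self _).trans hu
  simp at h3
  simp at h2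
  linarith

lemma final_case (n k b : ℕ) (hn : 0 < n) (G : SimpleGraph (Fin n)) [DecidableRel G.Adj]
    (hreg : G.IsRegularOfDegree k) (hk : 2 ≤ k) (hb : 1 ≤ b) (hkn : k + 1 ≤ n)
    (r s : ℝ) (hr : 0 ≤ r) (hsr : s = r + b) (hrs : r * s = k - b)
    (hAA : G.adjMatrix ℝ * G.adjMatrix ℝ = (r - s) • G.adjMatrix ℝ + (r * s) • 1
      + (b : ℝ) • Matrix.of fun _ _ => 1) : (k : ℝ) - s ≤ 0.14 * n := by
  have hn' : (0 : ℝ) < n := by positivity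
  have hb' : (1 : ℝ) ≤ b := by exact_mod_cast hb
  have hk' : (2 : ℝ) ≤ k := by exact_mod_cast hk
  obtain ⟨c, hc⟩ : ∃ c : ℝ, n * c = k - r := ⟨(k - r) / n, by field_simp⟩
  obtain ⟨-, hFF, hk2⟩ := core hn G hreg r s b c hc hAA
  have hkk : (k : ℝ) = s * (r + 1) - r := by linarith
  rcases hr.eq_or_lt with rfl | hr0
  · have : (k : ℝ) = s := by linarith
    rw [this, sub_self]; positivity
  have hs1 : 1 < s := by nlinarith
  have hcube := sum_cube_nonneg (projF (G.adjMatrix ℝ) r c) (r + s) (by linarith)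
    (by intro u v; simp [projF, Matrix.one_apply, adjMatrix_apply, eq_comm, G.adj_comm]) hFF
  rw [sum_projF G hreg] at hcube
  have hcube := nonneg_of_mul_nonneg_right hcube hn'
  have hnn : n * (s - r) = ((r + 1) * s - 2 * r) * ((r + 2) * s - r) := by
    have : (b : ℝ) = s - r := by linarith
    rw [this, hkk] at hk2
    linarith
  have hK := krein_arith r s k c n hr0 (by linarith) hs1 hkk hc hnn hcube
  -- multiplicity
  obtain ⟨g, hg⟩ := idem_trace_nat ((r + s)⁻¹ • projF (G.adjMatrix ℝ) r c) (by
    rw [Matrix.smul_mul, Matrix.mul_smul, hFF, smul_smul (r + s)⁻¹ (r + s),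
      inv_mul_cancel₀ (by linarith), one_smul])
  rw [Matrix.trace_smul, trace_projF, smul_eq_mul, inv_mul_eq_iff_eq_mul₀ (by linarith), hc] at hg
  by_cases h2g : (2 * (g : ℤ) - (n - 1)) = 0
  · have h2g' : 2 * (g : ℝ) = n - 1 := by
      have : ((2 * (g : ℤ) - (n - 1) : ℤ) : ℝ) = 0 := by rw [h2g]; simp
      push_cast at this; linarith
    have e1 : (k : ℝ) = g * b := by rw [hsr] at hg; linear_combination hg + r * h2g'
    have e2 : (k : ℝ) = 3 - b := by
      have : (k : ℝ) * k = k * (3 - b) := by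
        have : r - s = -b := by linarith
        rw [this, hrs] at hk2
        linear_combination hk2 + (-2) * e1 - b * h2g'
      exact mul_left_cancel₀ (by positivity) this
    have hb1 : (b : ℝ) = 1 := by linarith
    have hk1 : (k : ℝ) = 2 := by linarith
    have : (g : ℝ) = 2 := by rw [hb1] at e1; linarith
    have : (n : ℝ) = 5 := by linarith
    rw [this, hk1]
    have : 1.5 ≤ s := by
      by_contra! hlt
      nlinarith
    linarith
  · obtain ⟨t, rfl⟩ := int_root r hr b (k - b) (k - g * b) _
      (by push_cast; rw [← hsr, hrs]) h2g (by
        push_cast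
        rw [hsr] at hg
        linear_combination -hg)
    have ht : 1 ≤ t := by
      have : 0 < t := by exact_mod_cast hr0
      omega
    have hfin := arith_final t ht s hs1 (by linarith) hK
    have hsr0 : 0 < s - t := by linarith
    have : 0 ≤ (7 * (n : ℝ) - 50 * t * (s - 1)) * (s - t) := by
      have : (7 * (n : ℝ) - 50 * t * (s - 1)) * (s - t) =
        7 * ((t + 1) * s - 2 * t) * ((t + 2) * s - t) - 50 * t * (s - 1) * (s - t) := by
        linear_combination 7 * hnn
      rw [this]; exact hfin
    have := nonneg_of_mul_nonneg_left this hsr0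
    rw [hkk]
    linarith

lemma min_le {n k : ℕ} (hn : 2 ≤ n) (hk : 1 ≤ k) (G : SimpleGraph (Fin n)) [DecidableRel G.Adj]
    (hreg : G.IsRegularOfDegree k) (r s b : ℝ) (hr : 0 ≤ r)
    (hAA : G.adjMatrix ℝ * G.adjMatrix ℝ = (r - s) • G.adjMatrix ℝ + (r * s) • 1
      + b • Matrix.of fun _ _ => 1) (hA : (G.adjMatrix ℝ).IsHermitian) :
    ∃ i, hA.eigenvalues i = -s := by
  have hn' : (2 : ℝ) ≤ n := by exact_mod_cast hn
  have hk' : (1 : ℝ) ≤ k := by exact_mod_cast hk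
  obtain ⟨c, hc⟩ : ∃ c : ℝ, n * c = k - r := ⟨(k - r) / n, by field_simp⟩
  refine exists_eig _ hA (projF (G.adjMatrix ℝ) r c) ?_ _
    (core (by omega) G hreg r s b c hc hAA).1
  intro h0
  have := trace_projF G r c
  rw [h0, hc] at this
  simp at this
  nlinarith

theorem srg_triangle_free_sum_extreme_eigenvalues
    (n k b : ℕ) (hn : 0 < n) (G : SimpleGraph (Fin n)) [DecidableRel G.Adj]
    (hsrg : G.IsSRGWith n k 0 b)
    (hG : G.CliqueFree 3)
    (hA : (G.adjMatrix ℝ).IsHermitian)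
    (μ : Fin n → ℝ) (hmono : Antitone μ)
    (hperm : ∃ σ : Equiv.Perm (Fin n), ∀ i, μ i = hA.eigenvalues (σ i)) :
    μ ⟨0, hn⟩ + μ ⟨n - 1, by omega⟩ ≤ (0.14 : ℝ) * n := by
  obtain ⟨σ, hσ⟩ := hperm
  have hreg := hsrg.regular
  have hmax : μ ⟨0, hn⟩ ≤ k := by rw [hσ]; exact eig_le G hreg hA _
  have hmin : ∀ t, (∃ i, hA.eigenvalues i = t) → μ ⟨n - 1, by omega⟩ ≤ t := by
    rintro t ⟨i, rfl⟩
    have : hA.eigenvalues i = μ (σ.symm i) := by rw [hσ]; simp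
    rw [this]
    apply hmono
    rw [Fin.le_def]
    have := (σ.symm i).2
    simp only
    omega
  have hn' : (0 : ℝ) < n := by positivity
  have hkn : k + 1 ≤ n := by
    have := G.degree_lt_card_verts ⟨0, hn⟩
    rw [hreg, Fintype.card_fin] at this
    omega
  have hcreg := hsrg.compl_is_regular
  have hpar := IsSRGWith.param_eq G hsrg hn
  have hAA : ∀ u v, (G.adjMatrix ℝ * G.adjMatrix ℝ) u v =
      k * (1 : Matrix (Fin n) (Fin n) ℝ) u v + b * Gᶜ.adjMatrix ℝ u v := by
    intro u v
    rw [← pow_two, hsrg.matrix_eq]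
    rw [zero_smul, add_zero, Matrix.add_apply, Matrix.smul_apply, Matrix.smul_apply,
      nsmul_eq_mul, nsmul_eq_mul]
  rcases (by omega : k = 0 ∨ k = 1 ∨ 2 ≤ k) with rfl | rfl | hk
  · have : μ ⟨n - 1, by omega⟩ ≤ μ ⟨0, hn⟩ := hmono (by simp [Fin.le_def])
    push_cast at hmax
    nlinarith
  · have := hmin (-1) (min_le (by omega) le_rfl G hreg 1 1 0 (by norm_num) (by
      ext u v
      rw [hAA]
      have : (b : ℝ) * Gᶜ.adjMatrix ℝ u v = 0 := by
        have h0 : (n - 1 - 1) * b = 0 := by simpa using hpar.symm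
        rcases Nat.mul_eq_zero.1 h0 with h | h
        · have h1 := hcreg u
          rw [h] at h1
          have h2 : ¬ Gᶜ.Adj u v := by
            intro hadj
            have := (Gᶜ.degree_pos_iff_exists_adj u).2 ⟨v, hadj⟩
            omega
          simp only [adjMatrix_apply, h2, if_false, mul_zero]
        · simp [h]
      rw [this]
      simp) hA)
    push_cast at hmax
    nlinarith
  · have hpos : 0 < (n - k - 1) * b := by
      rw [← hpar]
      exact Nat.mul_pos (by omega) (by omega)
    have hb : 1 ≤ b := Nat.pos_of_mul_pos_left hpos
    have hdeg : 0 < n - k - 1 := Nat.pos_of_mul_pos_right hpos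
    have hbk : b ≤ k := by
      obtain ⟨v, hv⟩ := (Gᶜ.degree_pos_iff_exists_adj ⟨0, hn⟩).1 (by rw [hcreg]; exact hdeg)
      rw [compl_adj] at hv
      rw [← hsrg.of_not_adj hv.1 hv.2, ← hreg ⟨0, hn⟩]
      exact G.card_commonNeighbors_le_degree_left _ _
    have hbk' : (b : ℝ) ≤ k := by exact_mod_cast hbk
    set d := √((b : ℝ) ^ 2 + 4 * (k - b)) with hd
    have hd2 : d ^ 2 = (b : ℝ) ^ 2 + 4 * (k - b) := Real.sq_sqrt (by nlinarith)
    have hdb : (b : ℝ) ≤ d := Real.le_sqrt_of_sq_le (by nlinarith)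
    have hrs : (d - b) / 2 * ((d + b) / 2) = k - b := by nlinarith
    have hAA' : G.adjMatrix ℝ * G.adjMatrix ℝ = ((d - b) / 2 - (d + b) / 2) • G.adjMatrix ℝ
        + ((d - b) / 2 * ((d + b) / 2)) • 1 + (b : ℝ) • Matrix.of fun _ _ => 1 := by
      ext u v
      rw [hAA, hrs]
      by_cases h : u = v
      · subst h; simp
      · by_cases h' : G.Adj u v
        · simp [h, h', Matrix.one_apply]; ring
        · simp [h, h', Matrix.one_apply]
    have h1 := hmin _ (min_le (by omega) (by omega) G hreg _ _ _ (by linarith) hAA' hA)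
    have h2 := final_case n k b hn G hreg hk hb hkn _ _ (by linarith) (by ring) hrs hAA'
    linarith
end

section
/- Let $G$ be a simple graph that is strongly regular with parameters $(n, k, 0, b)$, and let $\mu_1 \geq \mu_2 \geq \dots \geq \mu_n$ be its adjacency-matrix eigenvalues. If $\mu_1 + \mu_n = 0.14\, n$, then $(n, k, b) = (100, 22, 6)$, i.e.\ $G$ is a strongly regular graph with the parameters of the Higman–Sims graph. -/
open Matrix SimpleGraph

/-- The Diophantine core. -/
lemma hs_arith (n k b t r : ℤ) (hb : 0 < b) (ht : 0 < t) (hr : 0 ≤ r) (hn : 0 < n)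
    (htb : t = r + b) (hk : k = b + r * t) (hp : k * (k - 1) = (n - k - 1) * b)
    (h : 50 * (k - t) = 7 * n) : n = 100 ∧ k = 22 ∧ b = 6 := by
  have key : 50 * (k - t) * b = 7 * (b * (1 + k) + k * (k - 1)) := by
    rw [hp, h]; ring
  rcases lt_or_ge r 4 with h4 | h4
  · interval_cases r
    · exfalso; subst htb; nlinarith
    · exfalso
      have : b * (8 * b - 28) = 0 := by subst htb; subst hk; nlinarith
      rcases mul_eq_zero.1 this with h | h <;> omega
    · have : (b - 6) * (8 * b + 7) = 0 := by subst htb; subst hk; nlinarith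
      rcases mul_eq_zero.1 this with h' | h'
      · have : b = 6 := by omega
        subst this; subst htb; omega
      · omega
    · exfalso
      have : 5 * b ^ 2 - 123 * b - 252 = 0 := by subst htb; subst hk; nlinarith
      have hb1 : b < 27 := by nlinarith
      interval_cases b <;> omega
  · exfalso
    obtain ⟨x, rfl⟩ : ∃ x, r = 4 + x := ⟨r - 4, by ring⟩
    obtain ⟨y, rfl⟩ : ∃ y, b = 1 + y := ⟨b - 1, by ring⟩
    have hx : 0 ≤ x := by omega
    have hy : 0 ≤ y := by omega
    subst htb; subst hk
    have : 0 < 7 * ((1 + y) * (1 + (1 + y + (4 + x) * (4 + x + (1 + y)))) + (1 + y + (4 + x) * (4 + x + (1 + y))) * ((1 + y + (4 + x) * (4 + x + (1 + y))) - 1)) - 50 * ((1 + y + (4 + x) * (4 + x + (1 + y))) - (4 + x + (1 + y))) * (1 + y) := by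
      ring_nf
      positivity
    linarith

/-- A rational root of the monic quadratic is an integer. -/
lemma hs_int (N b k : ℤ) (h : N ^ 2 + 50 * b * N + 2500 * (b - k) = 0) : ∃ m, N = 50 * m := by
  have h1 : (50 : ℤ) ^ 2 ∣ (2 * N + 50 * b) ^ 2 := ⟨b ^ 2 - 4 * (b - k), by linarith⟩
  have h2 := (Int.pow_dvd_pow_iff (by norm_num)).1 h1
  obtain ⟨M, rfl⟩ : ∃ M, N = 25 * M := by
    obtain ⟨c, hc⟩ := h2
    exact ⟨N / 25, by omega⟩
  have h3 : M ^ 2 = 2 * (2 * (k - b) - b * M) := by linarith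
  have h4 : (2 : ℤ) ∣ M := Int.prime_two.dvd_of_dvd_pow ⟨_, h3⟩
  obtain ⟨c, rfl⟩ := h4
  exact ⟨c, by ring⟩

lemma hs_J (n k b : ℕ) (G : SimpleGraph (Fin n)) [DecidableRel G.Adj]
    (hsrg : G.IsSRGWith n k 0 b) (v : Fin n → ℝ) (l : ℝ)
    (hv : G.adjMatrix ℝ *ᵥ v = l • v) (i : Fin n) :
    (l ^ 2 + b * l + b - k) * v i = b * ∑ j, v j := by
  have h := hsrg.matrix_eq (α := ℝ)
  have hc : Gᶜ.adjMatrix ℝ = Matrix.of (fun _ _ => (1 : ℝ)) - 1 - G.adjMatrix ℝ := by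
    ext i j
    by_cases hij : i = j
    · subst hij; simp
    · by_cases ha : G.Adj i j <;> simp [hij, ha]
  have h2 : (G.adjMatrix ℝ ^ 2) *ᵥ v = (l ^ 2) • v := by
    rw [pow_two, ← mulVec_mulVec, hv, mulVec_smul, hv, smul_smul, pow_two]
  rw [h, hc, zero_smul, add_zero, ← Nat.cast_smul_eq_nsmul ℝ k, ← Nat.cast_smul_eq_nsmul ℝ b] at h2
  have h3 := congrFun h2 i
  have h4 := congrFun hv i
  simp only [add_mulVec, sub_mulVec, smul_mulVec, one_mulVec, Pi.add_apply, Pi.sub_apply,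
    Pi.smul_apply, hv, smul_eq_mul] at h3
  have h5 : (Matrix.of (fun _ _ => (1 : ℝ)) *ᵥ v) i = ∑ j, v j := by
    simp [mulVec, dotProduct]
  rw [h5] at h3
  linarith

lemma hs_eig (n k b : ℕ) (G : SimpleGraph (Fin n)) [DecidableRel G.Adj]
    (hsrg : G.IsSRGWith n k 0 b) (v : Fin n → ℝ) (l : ℝ) (hv0 : v ≠ 0)
    (hv : G.adjMatrix ℝ *ᵥ v = l • v) :
    l = k ∨ l ^ 2 + b * l + b - k = 0 := by
  by_contra hcon
  push Not at hcon
  obtain ⟨h1, h2⟩ := hcon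
  have hJ := hs_J n k b G hsrg v l hv
  -- v is constant
  obtain ⟨i, hi⟩ : ∃ i, v i ≠ 0 := by
    by_contra hh
    push Not at hh
    exact hv0 (funext hh)
  have hconst : ∀ j, v j = v i := fun j =>
    mul_left_cancel₀ h2 ((hJ j).trans (hJ i).symm)
  have h4 := congrFun hv i
  rw [adjMatrix_mulVec_apply] at h4
  simp only [hconst, Finset.sum_const, card_neighborFinset_eq_degree, hsrg.regular.degree_eq,
    nsmul_eq_mul, Pi.smul_apply, smul_eq_mul] at h4
  exact h1 (mul_right_cancel₀ hi h4).symm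

/-- Let `G` be a strongly regular graph with parameters `(n, k, 0, b)` and
adjacency-matrix eigenvalues `μ₁ ≥ ⋯ ≥ μₙ`. If `μ₁ + μₙ = 0.14 n`, then
`(n, k, b) = (100, 22, 6)`, i.e. `G` has the parameters of the Higman–Sims graph. -/
theorem srg_equality_case_higman_sims
    (n k b : ℕ) (hn : 0 < n) (G : SimpleGraph (Fin n)) [DecidableRel G.Adj]
    (hsrg : G.IsSRGWith n k 0 b)
    (hA : (G.adjMatrix ℝ).IsHermitian)
    (μ : Fin n → ℝ) (hmono : Antitone μ)
    (hperm : ∃ σ : Equiv.Perm (Fin n), ∀ i, μ i = hA.eigenvalues (σ i))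
    (heq : μ ⟨0, hn⟩ + μ ⟨n - 1, by omega⟩ = (0.14 : ℝ) * n) :
    n = 100 ∧ k = 22 ∧ b = 6 := by
  obtain ⟨σ, hσ⟩ := hperm
  have hnR : (0 : ℝ) < n := by exact_mod_cast hn
  have htr : ∑ i, μ i = 0 := by
    have h1 := hA.trace_eq_sum_eigenvalues
    rw [trace_adjMatrix] at h1
    simp only [hσ]
    rw [Equiv.sum_comp σ hA.eigenvalues]
    simpa using h1.symm
  have hlo : ∀ i, μ ⟨n - 1, by omega⟩ ≤ μ i := fun i => hmono (by
    rw [Fin.le_def]; have := i.2; simp only; omega)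
  have hhi : ∀ i, μ i ≤ μ ⟨0, hn⟩ := fun i => hmono (by rw [Fin.le_def]; simp)
  have hneg : μ ⟨n - 1, by omega⟩ < 0 := by
    by_contra hh
    push Not at hh
    have h0 : ∀ i, μ i = 0 := fun i =>
      (Finset.sum_eq_zero_iff_of_nonneg (fun i _ => hh.trans (hlo i))).1 htr i (Finset.mem_univ i)
    rw [h0, h0] at heq
    linarith
  have heig : ∀ i, μ i = k ∨ (μ i) ^ 2 + b * μ i + b - k = 0 := by
    intro i
    rw [hσ]
    refine hs_eig n k b G hsrg (hA.eigenvectorBasis (σ i)) _ ?_ (hA.mulVec_eigenvectorBasis _)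
    intro h
    apply hA.eigenvectorBasis.orthonormal.ne_zero (σ i)
    ext j
    exact congrFun h j
  have hk2 : (k : ℝ) ≤ (k : ℝ) ^ 2 := by exact_mod_cast Nat.le_self_pow two_ne_zero k
  have hk0 : (0 : ℝ) ≤ k := Nat.cast_nonneg k
  have hb0 : (0 : ℝ) ≤ b := Nat.cast_nonneg b
  have hle : ∀ i, μ i ≤ k := by
    intro i
    rcases heig i with h | h
    · exact h.le
    · by_contra hh
      push Not at hh
      nlinarith [mul_nonneg hb0 hk0, mul_nonneg hb0 (hk0.trans hh.le)]
  have hex : ∃ i, μ i = k := by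
    have hmem : (k : ℝ) ∈ spectrum ℝ (G.adjMatrix ℝ) := by
      rw [← spectrum_toLin']
      apply Module.End.HasEigenvalue.mem_spectrum
      apply Module.End.hasEigenvalue_of_hasEigenvector (x := fun _ => (1 : ℝ))
      refine ⟨?_, ?_⟩
      · rw [Module.End.mem_eigenspace_iff]
        ext i
        simp [adjMatrix_mulVec_apply, hsrg.regular.degree_eq]
      · intro h
        have := congrFun h ⟨0, hn⟩
        simp at this
    rw [hA.spectrum_real_eq_range_eigenvalues] at hmem
    obtain ⟨j, hj⟩ := hmem
    exact ⟨σ.symm j, by rw [hσ]; simpa using hj⟩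
  have hmax : μ ⟨0, hn⟩ = k := by
    obtain ⟨i, hi⟩ := hex
    exact le_antisymm (hle _) (hi ▸ hhi i)
  have hparam := IsSRGWith.param_eq G hsrg hn
  have hmin : (μ ⟨n - 1, by omega⟩) ^ 2 + b * μ ⟨n - 1, by omega⟩ + b - k = 0 := by
    rcases heig ⟨n - 1, by omega⟩ with h | h
    · linarith
    · exact h
  rw [hmax] at heq
  generalize μ ⟨n - 1, by omega⟩ = m at *
  have hkn : k < n := by
    have := G.degree_lt_card_verts ⟨0, hn⟩
    rwa [hsrg.regular.degree_eq, Fintype.card_fin] at this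
  have hkpos : 0 < k := by
    rcases Nat.eq_zero_or_pos k with h | h
    · subst h; push_cast at heq; linarith
    · exact h
  -- integrality
  have hN : ((7 * n - 50 * k : ℤ)) ^ 2 + 50 * (b : ℤ) * (7 * n - 50 * k) + 2500 * ((b : ℤ) - k) = 0 := by
    have h50 : (7 * n - 50 * k : ℝ) = 50 * m := by linarith
    have : ((7 * n - 50 * k : ℝ)) ^ 2 + 50 * (b : ℝ) * (7 * n - 50 * k) + 2500 * ((b : ℝ) - k) = 0 := by
      rw [h50]; linarith
    exact_mod_cast this
  obtain ⟨m', hm'⟩ := hs_int _ _ _ hN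
  have hmm : m = m' := by
    have : (7 * n - 50 * k : ℝ) = 50 * m' := by exact_mod_cast hm'
    linarith
  subst hmm
  have hneg' : m' < 0 := by exact_mod_cast hneg
  have hmin' : m' ^ 2 + b * m' + b - k = 0 := by exact_mod_cast hmin
  have hp : (k : ℤ) * (k - 1) = (n - k - 1) * b := by
    have e1 : ((k - 0 - 1 : ℕ) : ℤ) = k - 1 := by omega
    have e2 : ((n - k - 1 : ℕ) : ℤ) = n - k - 1 := by omega
    rw [← e1, ← e2]; exact_mod_cast hparam
  have hfin : (n : ℤ) = 100 ∧ (k : ℤ) = 22 ∧ (b : ℤ) = 6 := by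
    have hnz : (0 : ℤ) < n := by exact_mod_cast hn
    have hkz : (0 : ℤ) < k := by exact_mod_cast hkpos
    rcases eq_or_ne (k : ℤ) 1 with hk1 | hk1
    · exfalso
      omega
    have hbpos : (0 : ℤ) < b := by
      rcases Nat.eq_zero_or_pos b with h | h
      · subst h
        exfalso
        rw [Nat.cast_zero, mul_zero] at hp
        rcases mul_eq_zero.1 hp with h | h <;> omega
      · exact_mod_cast h
    have hbk : (b : ℤ) ≤ k := by
      have hlt : (0 : ℤ) < n - k - 1 := by
        have : 0 < (n - k - 1 : ℤ) * b := by
          rw [← hp]; apply mul_pos hkz; omega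
        exact pos_of_mul_pos_left this hbpos.le
      obtain ⟨w, hw1, hw2⟩ : ∃ w : Fin n, w ≠ ⟨0, hn⟩ ∧ ¬ G.Adj ⟨0, hn⟩ w := by
        by_contra hh
        push Not at hh
        have hs : (Finset.univ : Finset (Fin n)) ⊆ insert ⟨0, hn⟩ (G.neighborFinset ⟨0, hn⟩) := by
          intro w _
          by_cases hw : w = ⟨0, hn⟩
          · simp [hw]
          · simp [hh w hw]
        have := (Finset.card_le_card hs).trans (Finset.card_insert_le _ _)
        rw [card_neighborFinset_eq_degree, hsrg.regular.degree_eq, Finset.card_univ,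
          Fintype.card_fin] at this
        omega
      have h1 := hsrg.of_not_adj (Ne.symm hw1) hw2
      have h2 := G.card_commonNeighbors_le_degree_left ⟨0, hn⟩ w
      rw [h1, hsrg.regular.degree_eq] at h2
      exact_mod_cast h2
    have hr : 0 ≤ -m' - b := by
      by_contra hh
      push Not at hh
      nlinarith [mul_pos_of_neg_of_neg hneg' hh]
    exact hs_arith n k b (-m') (-m' - b) hbpos (by omega) hr hnz (by ring) (by linarith) hp
      (by linarith)
  omega
end

section
/- Let $G$ be a simple graph that is strongly regular with parameters $(n, k, 0, b)$ with $k \geq 1$, and let $\mu_1 \geq \mu_2 \geq \dots \geq \mu_n$ be its adjacency-matrix eigenvalues. If the second-largest eigenvalue satisfies $\mu_2 > 0$, then $n > \mu_n^2$. -/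
open Matrix SimpleGraph

lemma aux_sum_sq {n : ℕ} {A : Matrix (Fin n) (Fin n) ℝ} (hA : A.IsHermitian) :
    ∑ i, hA.eigenvalues i ^ 2 = (A ^ 2).trace := by
  conv_rhs => rw [hA.spectral_theorem, ← map_pow, Unitary.conjStarAlgAut_apply, Matrix.trace_mul_comm,
    ← mul_assoc, Unitary.coe_star_mul_self, one_mul, Matrix.diagonal_pow, Matrix.trace_diagonal]
  simp

lemma aux_expand {n : ℕ} {A : Matrix (Fin n) (Fin n) ℝ} (hA : A.IsHermitian) (x : Fin n → ℝ) :
    x ⬝ᵥ (A *ᵥ x) = ∑ i, hA.eigenvalues i * ((hA.eigenvectorBasis i).ofLp ⬝ᵥ x) ^ 2 := by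
  have h := hA.eigenvectorBasis.sum_inner_mul_inner (WithLp.toLp 2 x) (WithLp.toLp 2 (A *ᵥ x))
  have e : ∀ y z : EuclideanSpace ℝ (Fin n), inner ℝ y z = y.ofLp ⬝ᵥ z.ofLp := by
    intro y z
    rw [EuclideanSpace.inner_eq_star_dotProduct, dotProduct_comm]; simp
  simp only [e] at h
  rw [← h]
  refine Finset.sum_congr rfl fun i _ => ?_
  have hT : Aᵀ = A := by
    have := hA.eq
    rwa [conjTranspose_eq_transpose_of_trivial] at this
  rw [Matrix.dotProduct_mulVec, ← Matrix.mulVec_transpose, hT, hA.mulVec_eigenvectorBasis,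
    smul_dotProduct, dotProduct_comm x, smul_eq_mul]
  ring

/-- Inertia bound. -/
lemma aux_inertia {n : ℕ} {A : Matrix (Fin n) (Fin n) ℝ} (hA : A.IsHermitian)
    (S : Finset (Fin n)) (hS : ∀ i ∈ S, ∀ j ∈ S, A i j = 0) :
    S.card ≤ (Finset.univ.filter fun i => hA.eigenvalues i ≤ 0).card := by
  by_contra! hlt
  set N := Finset.univ.filter fun i => hA.eigenvalues i ≤ 0 with hN
  let E : (S → ℝ) →ₗ[ℝ] (Fin n → ℝ) :=
    { toFun := fun x i => if h : i ∈ S then x ⟨i, h⟩ else 0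
      map_add' := by intro x y; ext i; by_cases h : i ∈ S <;> simp [h]
      map_smul' := by intro c y; ext i; by_cases h : i ∈ S <;> simp [h] }
  let F : (S → ℝ) →ₗ[ℝ] (N → ℝ) :=
    { toFun := fun x j => (hA.eigenvectorBasis j).ofLp ⬝ᵥ E x
      map_add' := by intro x y; ext i; simp [dotProduct_add]
      map_smul' := by intro x y; ext i; simp [dotProduct_smul] }
  have hk : LinearMap.ker F ≠ ⊥ := by
    apply LinearMap.ker_ne_bot_of_finrank_lt
    simpa using hlt
  obtain ⟨x, hx, hx0⟩ := (Submodule.ne_bot_iff _).1 hk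
  have hF : ∀ j, hA.eigenvalues j ≤ 0 → (hA.eigenvectorBasis j).ofLp ⬝ᵥ E x = 0 := by
    intro j hj
    exact congrFun (LinearMap.mem_ker.1 hx) ⟨j, by simp [hN, hj]⟩
  have h1 : E x ⬝ᵥ (A *ᵥ E x) = 0 := by
    simp only [dotProduct, mulVec]
    refine Finset.sum_eq_zero fun i _ => ?_
    by_cases hi : i ∈ S
    · rw [Finset.sum_eq_zero, mul_zero]
      intro j _
      by_cases hj : j ∈ S
      · simp [hS i hi j hj]
      · simp [E, hj]
    · simp [E, hi]
  rw [aux_expand hA] at h1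
  have h2 := (Finset.sum_eq_zero_iff_of_nonneg (fun i _ => by
    rcases le_or_gt (hA.eigenvalues i) 0 with h | h
    · simp [hF i h]
    · positivity)).1 h1
  have h3 : ∀ i, inner ℝ (hA.eigenvectorBasis i) (WithLp.toLp 2 (E x)) = 0 := by
    intro i
    rw [EuclideanSpace.inner_eq_star_dotProduct, dotProduct_comm]
    simp only [star_trivial]
    rcases le_or_gt (hA.eigenvalues i) 0 with h | h
    · exact hF i h
    · have := h2 i (Finset.mem_univ _)
      rcases mul_eq_zero.1 this with h' | h'
      · linarith
      · exact pow_eq_zero_iff (two_ne_zero) |>.1 h'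
  have h4 : WithLp.toLp 2 (E x) = 0 := by
    rw [← hA.eigenvectorBasis.sum_repr' (WithLp.toLp 2 (E x))]
    simp [h3]
  apply hx0
  ext i
  have h5 : E x i = 0 := by
    have := congrArg (fun z : EuclideanSpace ℝ (Fin n) => z.ofLp i) h4
    simpa using this
  simpa [E] using h5

lemma aux_sq_mulVec {n k b : ℕ} {G : SimpleGraph (Fin n)} [DecidableRel G.Adj]
    (hsrg : G.IsSRGWith n k 0 b) (v : Fin n → ℝ) (θ : ℝ)
    (hv : G.adjMatrix ℝ *ᵥ v = θ • v) (i : Fin n) :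
    θ ^ 2 * v i = k * v i + b * (∑ j, v j - v i - θ * v i) := by
  have h := hsrg.matrix_eq (α := ℝ)
  have hc : Gᶜ.adjMatrix ℝ = Matrix.of (fun _ _ => (1 : ℝ)) - 1 - G.adjMatrix ℝ := by
    ext p q
    by_cases hpq : p = q
    · subst hpq; simp
    · by_cases ha : G.Adj p q <;> simp [hpq, ha, Matrix.one_apply]
  rw [hc, ← Nat.cast_smul_eq_nsmul ℝ k, ← Nat.cast_smul_eq_nsmul ℝ b] at h
  have h' := congrFun (congrArg (fun M => M *ᵥ v) h) i
  simp only [pow_two, ← Matrix.mulVec_mulVec, hv, Matrix.mulVec_smul, Matrix.add_mulVec,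
    Matrix.sub_mulVec, Matrix.smul_mulVec, Matrix.one_mulVec, Pi.add_apply, Pi.sub_apply,
    Pi.smul_apply, smul_eq_mul, zero_smul, Matrix.zero_mulVec] at h'
  have hJ : (Matrix.of (fun _ _ => (1 : ℝ)) *ᵥ v) i = ∑ j, v j := by
    simp [Matrix.mulVec, dotProduct]
  rw [hJ] at h'
  simp only [Pi.zero_apply] at h'
  linarith

lemma aux_sum {n k b : ℕ} {G : SimpleGraph (Fin n)} [DecidableRel G.Adj]
    (hsrg : G.IsSRGWith n k 0 b) (v : Fin n → ℝ) (θ : ℝ)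
    (hv : G.adjMatrix ℝ *ᵥ v = θ • v) : (k : ℝ) * ∑ j, v j = θ * ∑ j, v j := by
  have h : ∑ i, (G.adjMatrix ℝ *ᵥ v) i = ∑ i, (θ • v) i := by rw [hv]
  simp only [Matrix.mulVec, dotProduct] at h
  rw [Finset.sum_comm] at h
  simp only [← Finset.sum_mul, Pi.smul_apply, smul_eq_mul, ← Finset.mul_sum] at h
  rw [← h, Finset.mul_sum]
  refine Finset.sum_congr rfl fun j _ => ?_
  congr 1
  have := hsrg.regular j
  simp only [adjMatrix_apply, Finset.sum_boole]
  rw [← this, ← card_neighborFinset_eq_degree]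
  congr 2
  ext x; simp [G.adj_comm]

/-- Let `G` be strongly regular with parameters `(n, k, 0, b)`, `k ≥ 1`,
with adjacency-matrix eigenvalues `μ₁ ≥ μ₂ ≥ ⋯ ≥ μₙ`. If the second-largest eigenvalue
satisfies `μ₂ > 0`, then `n > μₙ²`. (The hypothesis `1 < n` ensures that the
second-largest eigenvalue exists.) -/
theorem srg_card_gt_min_eigenvalue_sq
    (n k b : ℕ) (hn : 1 < n) (G : SimpleGraph (Fin n)) [DecidableRel G.Adj]
    (hsrg : G.IsSRGWith n k 0 b) (hk : 1 ≤ k)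
    (hA : (G.adjMatrix ℝ).IsHermitian)
    (μ : Fin n → ℝ) (hmono : Antitone μ)
    (hperm : ∃ σ : Equiv.Perm (Fin n), ∀ i, μ i = hA.eigenvalues (σ i))
    (hμ2 : 0 < μ ⟨1, hn⟩) :
    μ ⟨n - 1, by omega⟩ ^ 2 < (n : ℝ) := by
  obtain ⟨σ, hσ⟩ := hperm
  set A := G.adjMatrix ℝ with hAdef
  have hk' : (1 : ℝ) ≤ k := by exact_mod_cast hk
  have hb' : (0 : ℝ) ≤ b := b.cast_nonneg
  -- eigenvector facts
  have hne : ∀ i, ∃ p, (hA.eigenvectorBasis i).ofLp p ≠ 0 := by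
    intro i
    by_contra! h
    have h0 : hA.eigenvectorBasis i = 0 := by ext p; simpa using h p
    have := hA.eigenvectorBasis.orthonormal.1 i
    rw [h0] at this; simp at this
  have hroot : ∀ i, hA.eigenvalues i = k ∨
      hA.eigenvalues i ^ 2 + b * hA.eigenvalues i + b - k = 0 := by
    intro i
    have hv := hA.mulVec_eigenvectorBasis i
    by_cases hs : ∑ j, (hA.eigenvectorBasis i).ofLp j = 0
    · right
      obtain ⟨p, hp⟩ := hne i
      have := aux_sq_mulVec hsrg _ _ hv p
      rw [hs] at this
      apply mul_right_cancel₀ hp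
      linarith
    · left
      have := aux_sum hsrg _ _ hv
      exact (mul_right_cancel₀ hs this).symm
  have hconst : 1 ≤ b → ∀ i, hA.eigenvalues i = k → ∃ c : ℝ, ∀ p, (hA.eigenvectorBasis i).ofLp p = c := by
    intro hb i hi
    have hb1 : (1 : ℝ) ≤ b := by exact_mod_cast hb
    have hv := hA.mulVec_eigenvectorBasis i
    refine ⟨(b * ∑ j, (hA.eigenvectorBasis i).ofLp j) / (k ^ 2 - k + b + b * k), fun p => ?_⟩
    have := aux_sq_mulVec hsrg _ _ hv p
    rw [hi] at this
    have hpos : (0 : ℝ) < k ^ 2 - k + b + b * k := by nlinarith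
    rw [eq_div_iff hpos.ne']
    linarith
  have h01 : μ ⟨1, hn⟩ ≤ μ ⟨0, by omega⟩ := hmono (by simp [Fin.le_def])
  have hbk : (b : ℝ) < k := by
    rcases Nat.eq_zero_or_pos b with hb | hb
    · subst hb; simp; linarith
    have hb1 : (1 : ℝ) ≤ b := by exact_mod_cast hb
    rcases hroot (σ ⟨1, hn⟩) with h1 | h1
    swap
    · rw [← hσ] at h1; nlinarith
    rcases hroot (σ ⟨0, by omega⟩) with h0 | h0
    swap
    · rw [← hσ] at h0; nlinarith
    exfalso
    obtain ⟨c, hc⟩ := hconst hb _ h1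
    obtain ⟨d, hd⟩ := hconst hb _ h0
    have hij : σ ⟨1, hn⟩ ≠ σ ⟨0, by omega⟩ := by
      intro h; have := σ.injective h; simp at this
    have horth := hA.eigenvectorBasis.orthonormal.2 hij
    beta_reduce at horth
    rw [EuclideanSpace.inner_eq_star_dotProduct] at horth
    simp [dotProduct, hc, hd] at horth
    obtain ⟨p, hp⟩ := hne (σ ⟨1, hn⟩)
    obtain ⟨q, hq⟩ := hne (σ ⟨0, by omega⟩)
    rw [hc] at hp; rw [hd] at hq
    rcases horth with h | h | h
    · omega
    · exact absurd h (by assumption)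
    · exact absurd h (by assumption)
  -- inertia
  let v0 : Fin n := ⟨0, by omega⟩
  have hcard := aux_inertia hA (G.neighborFinset v0) (by
    intro i hi j hj
    rw [mem_neighborFinset] at hi hj
    simp only [hAdef, adjMatrix_apply, ite_eq_right_iff, one_ne_zero, imp_false]
    intro hij
    have := hsrg.of_adj i j hij
    rw [Fintype.card_eq_zero_iff] at this
    exact this.elim ⟨v0, by simp [mem_commonNeighbors, hi.symm, hj.symm]⟩)
  rw [card_neighborFinset_eq_degree, hsrg.regular v0] at hcard
  set N := Finset.univ.filter fun i => hA.eigenvalues i ≤ 0 with hN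
  set m := μ ⟨n - 1, by omega⟩ with hm
  have hmin : ∀ i, m ≤ hA.eigenvalues i := by
    intro i
    have := hσ (σ.symm i)
    rw [Equiv.apply_symm_apply] at this
    rw [← this]
    apply hmono
    rw [Fin.le_def]; have := (σ.symm i).2; simp; omega
  have hNe : N.Nonempty := Finset.card_pos.1 (by omega)
  obtain ⟨t, ht⟩ := hNe
  have hm0 : m ≤ 0 := (hmin t).trans (by simpa [hN] using ht)
  have hmroot : m ^ 2 + b * m + b - k = 0 := by
    rcases hroot (σ ⟨n - 1, by omega⟩) with h | h
    · rw [← hσ] at h; linarith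
    · rwa [← hσ] at h
  have hNm : ∀ i ∈ N, hA.eigenvalues i = m := by
    intro i hi
    have hi0 : hA.eigenvalues i ≤ 0 := by simpa [hN] using hi
    rcases hroot i with h | h
    · linarith
    · by_contra hne
      have h1 : (hA.eigenvalues i - m) * (hA.eigenvalues i + m + b) = 0 := by linarith
      rcases mul_eq_zero.1 h1 with h2 | h2
      · exact hne (by linarith)
      · have h3 : (b : ℝ) = - hA.eigenvalues i - m := by linarith
        have h4 := mul_nonneg_of_nonpos_of_nonpos hi0 hm0
        rw [h3] at h
        nlinarith
  have htr : ∑ i, hA.eigenvalues i ^ 2 = n * k := by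
    rw [aux_sum_sq hA, hsrg.matrix_eq, ← Nat.cast_smul_eq_nsmul ℝ k, ← Nat.cast_smul_eq_nsmul ℝ b,
      Matrix.trace_add, Matrix.trace_add, Matrix.trace_smul, Matrix.trace_smul, trace_adjMatrix]
    simp [mul_comm]
  have hsN : ∑ i ∈ N, hA.eigenvalues i ^ 2 = N.card * m ^ 2 := by
    rw [Finset.sum_congr rfl (fun i hi => by rw [hNm i hi])]
    simp
  have hlt : ∑ i ∈ N, hA.eigenvalues i ^ 2 < ∑ i, hA.eigenvalues i ^ 2 := by
    apply Finset.sum_lt_sum_of_subset (Finset.subset_univ _) (Finset.mem_univ (σ ⟨1, hn⟩))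
    · rw [hσ] at hμ2; simp [hN, hμ2]
    · rw [hσ] at hμ2; positivity
    · intros; positivity
  rw [htr, hsN] at hlt
  have hcard' : (k : ℝ) ≤ N.card := by exact_mod_cast hcard
  have := mul_le_mul_of_nonneg_right hcard' (sq_nonneg m)
  have h5 : (k : ℝ) * m ^ 2 < k * n := by linarith
  exact lt_of_mul_lt_mul_left h5 (by linarith)
end

section
/- Let $G$ be a $d$-regular triangle-free simple graph on $n$ vertices with $d < n$, and let $\mu_n$ denote the smallest eigenvalue of its adjacency matrix. Then $\mu_n \leq -\dfrac{d^2}{n - d}$. -/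
open Matrix SimpleGraph

theorem quad_lower_aux {n : ℕ} (A : Matrix (Fin n) (Fin n) ℝ) (hA : A.IsHermitian) (m : ℝ)
    (hm : ∀ i, m ≤ hA.eigenvalues i) (x : Fin n → ℝ) : m * (x ⬝ᵥ x) ≤ x ⬝ᵥ (A *ᵥ x) := by
  have hB : (A - algebraMap ℝ (Matrix (Fin n) (Fin n) ℝ) m).IsHermitian := by
    apply hA.sub
    rw [Matrix.algebraMap_eq_diagonal]
    exact Matrix.isHermitian_diagonal _
  have hP : (A - algebraMap ℝ (Matrix (Fin n) (Fin n) ℝ) m).PosSemidef := by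
    rw [hB.posSemidef_iff_eigenvalues_nonneg]
    intro i
    have h1 : hB.eigenvalues i ∈ spectrum ℝ (A - algebraMap ℝ (Matrix (Fin n) (Fin n) ℝ) m) := by
      rw [hB.spectrum_real_eq_range_eigenvalues]
      exact ⟨i, rfl⟩
    have h2 : m + hB.eigenvalues i ∈ spectrum ℝ A := by
      rw [add_comm, spectrum.add_mem_iff, ← sub_eq_neg_add]
      exact h1
    rw [hA.spectrum_real_eq_range_eigenvalues] at h2
    obtain ⟨j, hj⟩ := h2
    have := hm j
    simp only [Pi.zero_apply]
    linarith
  have h := hP.dotProduct_mulVec_nonneg x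
  rw [Matrix.sub_mulVec, dotProduct_sub, Algebra.algebraMap_eq_smul_one, Matrix.smul_mulVec,
    Matrix.one_mulVec, dotProduct_smul, smul_eq_mul] at h
  simp only [star_trivial] at h
  linarith

/-- Let `G` be a `d`-regular triangle-free simple graph on `n` vertices
with `d < n`, and let `μₙ` be the smallest eigenvalue of its adjacency matrix. Then
`μₙ ≤ -d² / (n - d)`. -/
theorem regular_triangle_free_min_eigenvalue_bound
    (n d : ℕ) (hd : d < n) (G : SimpleGraph (Fin n)) [DecidableRel G.Adj]
    (hreg : G.IsRegularOfDegree d)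
    (hG : G.CliqueFree 3)
    (hA : (G.adjMatrix ℝ).IsHermitian)
    (μ : Fin n → ℝ) (hmono : Antitone μ)
    (hperm : ∃ σ : Equiv.Perm (Fin n), ∀ i, μ i = hA.eigenvalues (σ i)) :
    μ ⟨n - 1, by omega⟩ ≤ -((d : ℝ) ^ 2) / ((n : ℝ) - d) := by
  obtain ⟨σ, hσ⟩ := hperm
  set m := μ ⟨n - 1, by omega⟩ with hmdef
  have hm : ∀ i, m ≤ hA.eigenvalues i := by
    intro i
    have h1 := hσ (σ.symm i)
    rw [Equiv.apply_symm_apply] at h1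
    rw [← h1]
    apply hmono
    rw [Fin.le_def]
    have := (σ.symm i).isLt
    simp only
    omega
  have hQ := quad_lower_aux _ hA m hm
  have hnd : (0 : ℝ) < (n : ℝ) - d := by
    have : (d : ℝ) < n := by exact_mod_cast hd
    linarith
  have hn : (0 : ℝ) < n := by
    have : 0 < n := by omega
    exact_mod_cast this
  set e : Fin n → ℝ := fun _ => 1 with he
  have hAe : G.adjMatrix ℝ *ᵥ e = (d : ℝ) • e := by
    ext i
    simp [he, SimpleGraph.adjMatrix_mulVec_apply, hreg.degree_eq i]
  have hee : e ⬝ᵥ e = n := by simp [he, dotProduct]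
  rcases Nat.eq_zero_or_pos d with h0 | hpos
  · have h := hQ e
    rw [hAe, dotProduct_smul, hee, h0] at h
    subst h0
    simp at h ⊢
    nlinarith
  let v : Fin n := ⟨0, by omega⟩
  set s : Fin n → ℝ := fun i => if G.Adj v i then 1 else 0 with hs
  have hsum : ∑ i, s i = d := by
    rw [← hreg.degree_eq v]
    simp [hs, ← SimpleGraph.card_neighborFinset_eq_degree, SimpleGraph.neighborFinset_eq_filter]
  have hes : e ⬝ᵥ s = d := by simpa [he, dotProduct] using hsum
  have hse : s ⬝ᵥ e = d := by rw [dotProduct_comm, hes]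
  have hss : s ⬝ᵥ s = d := by
    rw [← hsum]
    rw [dotProduct]
    refine Finset.sum_congr rfl fun i _ => ?_
    by_cases hi : G.Adj v i <;> simp [hs, hi]
  have hAs : s ⬝ᵥ (G.adjMatrix ℝ *ᵥ s) = 0 := by
    rw [dotProduct]
    apply Finset.sum_eq_zero
    intro i _
    by_cases hi : G.Adj v i
    · rw [SimpleGraph.adjMatrix_mulVec_apply, Finset.sum_eq_zero, mul_zero]
      intro j hj
      rw [SimpleGraph.mem_neighborFinset] at hj
      have : ¬ G.Adj v j := fun hvj =>
        hG {v, i, j} (SimpleGraph.is3Clique_triple_iff.2 ⟨hi, hvj, hj⟩)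
      simp [hs, this]
    · simp [hs, hi]
  have hAes : e ⬝ᵥ (G.adjMatrix ℝ *ᵥ s) = d * d := by
    rw [Matrix.dotProduct_mulVec, ← Matrix.mulVec_transpose, SimpleGraph.transpose_adjMatrix, hAe,
      smul_dotProduct, hes, smul_eq_mul]
  have h := hQ ((n : ℝ) • s - (d : ℝ) • e)
  simp only [Matrix.mulVec_sub, Matrix.mulVec_smul, hAe, dotProduct_sub, sub_dotProduct,
    dotProduct_smul, smul_dotProduct, smul_eq_mul, hes, hse, hss, hAs, hAes, hee] at h
  have hdpos : (0 : ℝ) < d := by exact_mod_cast hpos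
  rw [le_div_iff₀ hnd]
  have hnd2 : (0 : ℝ) < n * d := mul_pos hn hdpos
  refine le_of_mul_le_mul_left ?_ hnd2
  linarith
end
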